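/- Let H be a complex separable Hilbert space, (e_j)_{j≥1} an orthonormal basis, (λ_j)_{j≥1} a nondecreasing sequence of positive reals, L(t) a family of symmetric operators from H¹(Γ) to H, ε > 0, B₁ > 0, E ∈ ℝ, and ψ ∈ H¹(Γ) with ‖ψ‖ = 1. Suppose φ⁰ : [0,∞) → H is continuous with φ⁰(0) = ψ, for each t > 0, φ⁰(t) ∈ H¹(Γ), φ⁰ has derivative i·L(t)φ⁰(t) at t, and ‖φ⁰(t)‖₁ ≤ B₁‖ψ‖₁ for all t ≥ 0. Suppose φ^ε : [0,∞) → H is continuous with φ^ε(0) = ψ, and for each t > 0, φ^ε(t) ∈ H²(Γ) and φ^ε has derivative i·L(t)φ^ε(t) − ε·Γφ^ε(t) at t. Then for every τ ∈ (0, B₁^{−2}‖ψ‖₁^{−2}], one has |⟨φ^ε(τ/ε), φ⁰(τ/ε)⟩| ≥ 3/4 − (τ/2)B₁²‖ψ‖₁², and in particular ‖φ^ε(τ/ε)‖ ≥ 1/4. -/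

import Mathlib

open scoped InnerProductSpace ENNReal
open MeasureTheory

/-- The (squared) homogeneous `H¹(Γ)` norm: `‖ψ‖₁² = Σ_j λ_j |⟨e_j, ψ⟩|² ∈ [0,∞]`. -/
noncomputable def H1normSq {H : Type*} [NormedAddCommGroup H] [InnerProductSpace ℂ H]
    (e : ℕ → H) (lam : ℕ → ℝ) (ψ : H) : ℝ≥0∞ :=
  ∑' j, ENNReal.ofReal (lam j * ‖⟪e j, ψ⟫_ℂ‖ ^ 2)

/-- `ψ ∈ H¹(Γ)`. -/
def MemH1 {H : Type*} [NormedAddCommGroup H] [InnerProductSpace ℂ H]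
    (e : ℕ → H) (lam : ℕ → ℝ) (ψ : H) : Prop :=
  H1normSq e lam ψ ≠ ⊤

/-- `ψ ∈ H²(Γ)`, i.e. `Σ_j λ_j² |⟨e_j, ψ⟩|² < ∞`. -/
def MemH2 {H : Type*} [NormedAddCommGroup H] [InnerProductSpace ℂ H]
    (e : ℕ → H) (lam : ℕ → ℝ) (ψ : H) : Prop :=
  (∑' j, ENNReal.ofReal ((lam j) ^ 2 * ‖⟪e j, ψ⟫_ℂ‖ ^ 2)) ≠ ⊤

/-- `Γψ = Σ_j λ_j ⟨e_j, ψ⟩ e_j` (defined as a `tsum`; meaningful for `ψ ∈ H²(Γ)`). -/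
noncomputable def Gam {H : Type*} [NormedAddCommGroup H] [InnerProductSpace ℂ H]
    [CompleteSpace H] (e : ℕ → H) (lam : ℕ → ℝ) (ψ : H) : H :=
  ∑' j, ((lam j : ℂ) * ⟪e j, ψ⟫_ℂ) • e j

/-!
A symmetric generator contributes nothing to the derivatives of `‖φ⁰‖²`, `‖φ^ε‖²` and
`Re ⟨φ^ε, φ⁰⟩`: the first is constant, while the other two evolve at the rates `-2ε ‖φ^ε‖₁²` and
`-ε Re ⟨Γφ^ε, φ⁰⟩`. Cauchy–Schwarz and AM–GM in the `H¹(Γ)` inner product give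
`Re ⟨Γφ^ε, φ⁰⟩ ≤ (‖φ^ε‖₁² + ‖φ⁰‖₁²) / 2`, and subtracting a quarter of `‖φ^ε‖²` from the overlap
cancels exactly the uncontrolled term `‖φ^ε‖₁²`. Hence `Re ⟨φ^ε, φ⁰⟩ - ‖φ^ε‖² / 4` starts at
`3/4 ‖ψ‖²` and decreases at rate at most `ε/2 · sup ‖φ⁰‖₁²`.
-/

theorem hasSum_of_tsum_ofReal_ne_top {ι : Type*} {f : ι → ℝ} (hf : ∀ i, 0 ≤ f i)
    (h : ∑' i, ENNReal.ofReal (f i) ≠ ∞) : HasSum f (∑' i, ENNReal.ofReal (f i)).toReal := by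
  have hsum := ENNReal.hasSum_toReal h
  rw [← ENNReal.tsum_toReal_eq fun i => ENNReal.ofReal_ne_top] at hsum
  simpa only [ENNReal.toReal_ofReal (hf _)] using hsum

section WeightedNorms

variable {H : Type*} [NormedAddCommGroup H] [InnerProductSpace ℂ H]
  {e : ℕ → H} {lam : ℕ → ℝ} {x y : H}

theorem MemH1.hasSum (hx : MemH1 e lam x) (hlam : ∀ j, 0 ≤ lam j) :
    HasSum (fun j => lam j * ‖⟪e j, x⟫_ℂ‖ ^ 2) (H1normSq e lam x).toReal :=
  hasSum_of_tsum_ofReal_ne_top (fun j => mul_nonneg (hlam j) (sq_nonneg _)) hx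

theorem MemH2.summable (hx : MemH2 e lam x) :
    Summable fun j => lam j ^ 2 * ‖⟪e j, x⟫_ℂ‖ ^ 2 :=
  (hasSum_of_tsum_ofReal_ne_top (fun j => by positivity) hx).summable

theorem MemH2.memH1 (he : Orthonormal ℂ e) (hlam : ∀ j, 0 ≤ lam j) (hx : MemH2 e lam x) :
    MemH1 e lam x := by
  refine Summable.tsum_ofReal_ne_top <| .of_nonneg_of_le
    (fun j => mul_nonneg (hlam j) (sq_nonneg _)) (fun j => ?_)
    ((he.inner_products_summable (x := x)).add hx.summable)
  have hweight : lam j ≤ 1 + lam j ^ 2 := by nlinarith [sq_nonneg (lam j - 1)]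
  calc lam j * ‖⟪e j, x⟫_ℂ‖ ^ 2 ≤ (1 + lam j ^ 2) * ‖⟪e j, x⟫_ℂ‖ ^ 2 := by gcongr
    _ = ‖⟪e j, x⟫_ℂ‖ ^ 2 + lam j ^ 2 * ‖⟪e j, x⟫_ℂ‖ ^ 2 := by ring

variable [CompleteSpace H]

theorem MemH2.hasSum_Gam (he : Orthonormal ℂ e) (hx : MemH2 e lam x) :
    HasSum (fun j => ((lam j : ℂ) * ⟪e j, x⟫_ℂ) • e j) (Gam e lam x) := by
  have hcoeff : Summable fun j => ‖(lam j : ℂ) * ⟪e j, x⟫_ℂ‖ ^ 2 := by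
    simpa [mul_pow] using hx.summable
  exact ((he.orthogonalFamily.summable_iff_norm_sq_summable _).mpr hcoeff).hasSum

theorem MemH2.hasSum_re_inner_Gam (he : Orthonormal ℂ e) (hx : MemH2 e lam x) (y : H) :
    HasSum (fun j => lam j * (⟪x, e j⟫_ℂ * ⟪e j, y⟫_ℂ).re) (⟪Gam e lam x, y⟫_ℂ).re := by
  have hinner : HasSum (fun j => ⟪((lam j : ℂ) * ⟪e j, x⟫_ℂ) • e j, y⟫_ℂ) ⟪Gam e lam x, y⟫_ℂ :=
    (innerSLFlip ℂ y).hasSum (hx.hasSum_Gam he)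
  convert Complex.hasSum_re hinner using 2 with j
  rw [inner_smul_left, map_mul, inner_conj_symm, Complex.conj_ofReal,
    mul_assoc, Complex.re_ofReal_mul]

theorem MemH2.re_inner_Gam_self (he : Orthonormal ℂ e) (hlam : ∀ j, 0 ≤ lam j)
    (hx : MemH2 e lam x) : (⟪Gam e lam x, x⟫_ℂ).re = (H1normSq e lam x).toReal := by
  refine (hx.hasSum_re_inner_Gam he x).unique ?_
  convert (hx.memH1 he hlam).hasSum hlam using 3 with j
  rw [← inner_conj_symm x (e j), ← Complex.normSq_eq_conj_mul_self, Complex.ofReal_re,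
    Complex.normSq_eq_norm_sq]

theorem MemH2.re_inner_Gam_le (he : Orthonormal ℂ e) (hlam : ∀ j, 0 ≤ lam j)
    (hx : MemH2 e lam x) (hy : MemH1 e lam y) :
    (⟪Gam e lam x, y⟫_ℂ).re ≤
      ((H1normSq e lam x).toReal + (H1normSq e lam y).toReal) / 2 := by
  refine hasSum_le (fun j => ?_) (hx.hasSum_re_inner_Gam he y)
    ((((hx.memH1 he hlam).hasSum hlam).add (hy.hasSum hlam)).div_const 2)
  have hcoeff : (⟪x, e j⟫_ℂ * ⟪e j, y⟫_ℂ).re ≤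
      (‖⟪e j, x⟫_ℂ‖ ^ 2 + ‖⟪e j, y⟫_ℂ‖ ^ 2) / 2 := by
    calc (⟪x, e j⟫_ℂ * ⟪e j, y⟫_ℂ).re ≤ ‖⟪x, e j⟫_ℂ * ⟪e j, y⟫_ℂ‖ := Complex.re_le_norm _
      _ = ‖⟪e j, x⟫_ℂ‖ * ‖⟪e j, y⟫_ℂ‖ := by rw [norm_mul, norm_inner_symm]
      _ ≤ (‖⟪e j, x⟫_ℂ‖ ^ 2 + ‖⟪e j, y⟫_ℂ‖ ^ 2) / 2 := by
        linarith [two_mul_le_add_sq ‖⟪e j, x⟫_ℂ‖ ‖⟪e j, y⟫_ℂ‖]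
  calc lam j * (⟪x, e j⟫_ℂ * ⟪e j, y⟫_ℂ).re
      ≤ lam j * ((‖⟪e j, x⟫_ℂ‖ ^ 2 + ‖⟪e j, y⟫_ℂ‖ ^ 2) / 2) :=
        mul_le_mul_of_nonneg_left hcoeff (hlam j)
    _ = (lam j * ‖⟪e j, x⟫_ℂ‖ ^ 2 + lam j * ‖⟪e j, y⟫_ℂ‖ ^ 2) / 2 := by ring

end WeightedNorms

section Evolution

variable {H : Type*} [NormedAddCommGroup H] [InnerProductSpace ℂ H]

theorem re_inner_self_eq_norm_sq (x : H) : (⟪x, x⟫_ℂ).re = ‖x‖ ^ 2 :=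
  inner_self_eq_norm_sq (𝕜 := ℂ) x

theorem continuousOn_re_inner {u v : ℝ → H} {s : Set ℝ} (hu : ContinuousOn u s)
    (hv : ContinuousOn v s) : ContinuousOn (fun t => (⟪u t, v t⟫_ℂ).re) s :=
  Complex.continuous_re.comp_continuousOn (ContinuousOn.inner (𝕜 := ℂ) hu hv)

theorem hasDerivAt_re_inner_of_inner_eq {u v : ℝ → H} {a b p q : H} {t : ℝ}
    (hu : HasDerivAt u (Complex.I • a - p) t) (hv : HasDerivAt v (Complex.I • b - q) t)
    (hab : ⟪a, v t⟫_ℂ = ⟪u t, b⟫_ℂ) :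
    HasDerivAt (fun s => (⟪u s, v s⟫_ℂ).re) (-((⟪p, v t⟫_ℂ).re + (⟪u t, q⟫_ℂ).re)) t := by
  refine (Complex.reCLM.hasFDerivAt.comp_hasDerivAt t (hu.inner ℂ hv)).congr_deriv ?_
  simp only [inner_sub_left, inner_sub_right, inner_smul_left, inner_smul_right, hab,
    Complex.conj_I, Complex.reCLM_apply, Complex.add_re, Complex.sub_re, neg_mul, Complex.neg_re]
  ring

theorem norm_eq_norm_zero_of_hasDerivAt_I_smul {A u : ℝ → H} (hu : ContinuousOn u (Set.Ici 0))
    (hderiv : ∀ t, 0 < t → HasDerivAt u (Complex.I • A t) t)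
    (hA : ∀ t, 0 < t → ⟪A t, u t⟫_ℂ = ⟪u t, A t⟫_ℂ) {T : ℝ} (hT : 0 ≤ T) : ‖u T‖ = ‖u 0‖ := by
  have hcont := continuousOn_re_inner hu hu
  have hzero : ∀ t ∈ interior (Set.Ici (0 : ℝ)),
      HasDerivWithinAt (fun s => (⟪u s, u s⟫_ℂ).re) 0 (interior (Set.Ici 0)) t := by
    rw [interior_Ici]
    intro t ht
    have hsub : HasDerivAt u (Complex.I • A t - 0) t := by simpa using hderiv t ht
    simpa using (hasDerivAt_re_inner_of_inner_eq hsub hsub (hA t ht)).hasDerivWithinAt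
  have hsq : (⟪u T, u T⟫_ℂ).re = (⟪u 0, u 0⟫_ℂ).re := le_antisymm
    (antitoneOn_of_hasDerivWithinAt_nonpos (convex_Ici 0) hcont hzero (fun _ _ => le_rfl)
      Set.self_mem_Ici hT hT)
    (monotoneOn_of_hasDerivWithinAt_nonneg (convex_Ici 0) hcont hzero (fun _ _ => le_rfl)
      Set.self_mem_Ici hT hT)
  rw [re_inner_self_eq_norm_sq, re_inner_self_eq_norm_sq] at hsq
  exact (sq_eq_sq₀ (norm_nonneg _) (norm_nonneg _)).mp hsq

variable [CompleteSpace H] {e : ℕ → H} {lam : ℕ → ℝ} {L : ℝ → H → H} {ε : ℝ} {φ0 φε : ℝ → H}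

theorem hasDerivAt_re_inner_of_diffusive {a b : H} {t : ℝ}
    (hφε : HasDerivAt φε (Complex.I • a - ε • Gam e lam (φε t)) t)
    (hφ0 : HasDerivAt φ0 (Complex.I • b) t) (hab : ⟪a, φ0 t⟫_ℂ = ⟪φε t, b⟫_ℂ) :
    HasDerivAt (fun s => (⟪φε s, φ0 s⟫_ℂ).re) (-ε * (⟪Gam e lam (φε t), φ0 t⟫_ℂ).re) t := by
  rw [← sub_zero (Complex.I • b)] at hφ0
  refine (hasDerivAt_re_inner_of_inner_eq hφε hφ0 hab).congr_deriv ?_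
  rw [inner_smul_left_eq_smul, Complex.smul_re, inner_zero_right, Complex.zero_re, smul_eq_mul]
  ring

theorem hasDerivAt_norm_sq_of_diffusive (he : Orthonormal ℂ e) (hlam : ∀ j, 0 ≤ lam j)
    {a : H} {t : ℝ} (hφε : HasDerivAt φε (Complex.I • a - ε • Gam e lam (φε t)) t)
    (hH2 : MemH2 e lam (φε t)) (ha : ⟪a, φε t⟫_ℂ = ⟪φε t, a⟫_ℂ) :
    HasDerivAt (fun s => ‖φε s‖ ^ 2) (-2 * ε * (H1normSq e lam (φε t)).toReal) t := by
  simp only [← re_inner_self_eq_norm_sq]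
  refine (hasDerivAt_re_inner_of_inner_eq hφε hφε ha).congr_deriv ?_
  have hflip : (⟪φε t, ε • Gam e lam (φε t)⟫_ℂ).re = (⟪ε • Gam e lam (φε t), φε t⟫_ℂ).re :=
    inner_re_symm (𝕜 := ℂ) _ _
  rw [hflip, inner_smul_left_eq_smul, Complex.smul_re, hH2.re_inner_Gam_self he hlam,
    smul_eq_mul]
  ring

theorem hasDerivAt_re_inner_sub_norm_sq_of_diffusive (he : Orthonormal ℂ e)
    (hlam : ∀ j, 0 ≤ lam j) {a b : H} {t : ℝ}
    (hφε : HasDerivAt φε (Complex.I • a - ε • Gam e lam (φε t)) t)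
    (hφ0 : HasDerivAt φ0 (Complex.I • b) t) (hH2 : MemH2 e lam (φε t))
    (haa : ⟪a, φε t⟫_ℂ = ⟪φε t, a⟫_ℂ) (hab : ⟪a, φ0 t⟫_ℂ = ⟪φε t, b⟫_ℂ) :
    HasDerivAt (fun s => (⟪φε s, φ0 s⟫_ℂ).re - 1 / 4 * ‖φε s‖ ^ 2)
      (ε * ((H1normSq e lam (φε t)).toReal / 2 - (⟪Gam e lam (φε t), φ0 t⟫_ℂ).re)) t := by
  refine ((hasDerivAt_re_inner_of_diffusive hφε hφ0 hab).sub
    ((hasDerivAt_norm_sq_of_diffusive he hlam hφε hH2 haa).const_mul (1 / 4))).congr_deriv ?_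
  ring

theorem le_re_inner_of_H1normSq_le (he : Orthonormal ℂ e) (hlam : ∀ j, 0 ≤ lam j)
    (hL : ∀ t x y, MemH1 e lam x → MemH1 e lam y → ⟪L t x, y⟫_ℂ = ⟪x, L t y⟫_ℂ)
    (hε : 0 ≤ ε) (hφ0 : ContinuousOn φ0 (Set.Ici 0))
    (hφ0deriv : ∀ t, 0 < t → HasDerivAt φ0 (Complex.I • L t (φ0 t)) t)
    {M : NNReal} (hφ0bound : ∀ t, 0 < t → H1normSq e lam (φ0 t) ≤ M)
    (hφε : ContinuousOn φε (Set.Ici 0)) (hinit : φε 0 = φ0 0)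
    (hφεH2 : ∀ t, 0 < t → MemH2 e lam (φε t))
    (hφεderiv : ∀ t, 0 < t →
      HasDerivAt φε (Complex.I • L t (φε t) - ε • Gam e lam (φε t)) t)
    {T : ℝ} (hT : 0 ≤ T) :
    3 / 4 * ‖φ0 0‖ ^ 2 + 1 / 4 * ‖φε T‖ ^ 2 - ε * M / 2 * T ≤ (⟪φε T, φ0 T⟫_ℂ).re := by
  have hφ0H1 (t : ℝ) (ht : 0 < t) : MemH1 e lam (φ0 t) :=
    ne_top_of_le_ne_top ENNReal.coe_ne_top (hφ0bound t ht)
  let F (t : ℝ) : ℝ := (⟪φε t, φ0 t⟫_ℂ).re - 1 / 4 * ‖φε t‖ ^ 2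
  have hFcont : ContinuousOn F (Set.Ici 0) :=
    (continuousOn_re_inner hφε hφ0).sub (continuousOn_const.mul (hφε.norm.pow 2))
  have hFderiv : ∀ t ∈ interior (Set.Ici (0 : ℝ)), HasDerivAt F
      (ε * ((H1normSq e lam (φε t)).toReal / 2 - (⟪Gam e lam (φε t), φ0 t⟫_ℂ).re)) t := by
    rw [interior_Ici]
    intro t ht
    have hφεH1 := (hφεH2 t ht).memH1 he hlam
    exact hasDerivAt_re_inner_sub_norm_sq_of_diffusive he hlam (hφεderiv t ht) (hφ0deriv t ht)
      (hφεH2 t ht) (hL t _ _ hφεH1 hφεH1) (hL t _ _ hφεH1 (hφ0H1 t ht))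
  have hFderiv_ge : ∀ t ∈ interior (Set.Ici (0 : ℝ)), ε * (-M / 2) ≤ deriv F t := by
    intro t ht
    rw [(hFderiv t ht).deriv]
    rw [interior_Ici] at ht
    have hGam := (hφεH2 t ht).re_inner_Gam_le he hlam (hφ0H1 t ht)
    have hM := ENNReal.toReal_le_coe_of_le_coe (hφ0bound t ht)
    gcongr
    linarith
  have hF0 : F 0 = 3 / 4 * ‖φ0 0‖ ^ 2 := by
    simp only [F, hinit, re_inner_self_eq_norm_sq]
    ring
  have hgrowth : ε * (-M / 2) * (T - 0) ≤ F T - F 0 :=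
    (convex_Ici 0).mul_sub_le_image_sub_of_le_deriv hFcont
      (fun t ht => (hFderiv t ht).differentiableAt.differentiableWithinAt) hFderiv_ge
      0 Set.self_mem_Ici T hT hT
  rw [hF0] at hgrowth
  simp only [F] at hgrowth
  linarith

end Evolution

theorem statement11_general {H : Type*} [NormedAddCommGroup H] [InnerProductSpace ℂ H]
    [CompleteSpace H] {e : ℕ → H} (he : Orthonormal ℂ e) {lam : ℕ → ℝ}
    (hlam : ∀ j, 0 ≤ lam j) {L : ℝ → H → H}
    (hL : ∀ t x y, MemH1 e lam x → MemH1 e lam y → ⟪L t x, y⟫_ℂ = ⟪x, L t y⟫_ℂ)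
    {ε : ℝ} (hε : 0 < ε) {B₁ : ℝ} {ψ : H} (hψ : MemH1 e lam ψ)
    {φ0 : ℝ → H} (hφ0 : ContinuousOn φ0 (Set.Ici 0)) (hφ0init : φ0 0 = ψ)
    (hφ0deriv : ∀ t, 0 < t → HasDerivAt φ0 (Complex.I • L t (φ0 t)) t)
    (hφ0bound : ∀ t, 0 < t →
      H1normSq e lam (φ0 t) ≤ ENNReal.ofReal (B₁ ^ 2) * H1normSq e lam ψ)
    {φε : ℝ → H} (hφε : ContinuousOn φε (Set.Ici 0)) (hφεinit : φε 0 = ψ)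
    (hφεH2 : ∀ t, 0 < t → MemH2 e lam (φε t))
    (hφεderiv : ∀ t, 0 < t →
      HasDerivAt φε (Complex.I • L t (φε t) - ε • Gam e lam (φε t)) t)
    {τ : ℝ} (hτ : 0 ≤ τ) :
    3 / 4 * ‖ψ‖ ^ 2 - τ / 2 * B₁ ^ 2 * (H1normSq e lam ψ).toReal ≤
        ‖⟪φε (τ / ε), φ0 (τ / ε)⟫_ℂ‖ ∧
      (τ * (B₁ ^ 2 * (H1normSq e lam ψ).toReal) ≤ ‖ψ‖ ^ 2 → 1 / 4 * ‖ψ‖ ≤ ‖φε (τ / ε)‖) := by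
  have hT : 0 ≤ τ / ε := by positivity
  have hφ0H1 (t : ℝ) (ht : 0 < t) : MemH1 e lam (φ0 t) :=
    ne_top_of_le_ne_top (ENNReal.mul_ne_top ENNReal.ofReal_ne_top hψ) (hφ0bound t ht)
  have hφ0norm : ‖φ0 (τ / ε)‖ = ‖ψ‖ := hφ0init ▸ norm_eq_norm_zero_of_hasDerivAt_I_smul hφ0
    hφ0deriv (fun t ht => hL t _ _ (hφ0H1 t ht) (hφ0H1 t ht)) hT
  have hM : ((B₁ ^ 2 * (H1normSq e lam ψ).toReal).toNNReal : ℝ≥0∞) =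
      ENNReal.ofReal (B₁ ^ 2) * H1normSq e lam ψ := by
    rw [← ENNReal.ofReal, ENNReal.ofReal_mul (sq_nonneg _), ENNReal.ofReal_toReal hψ]
  have hre := le_re_inner_of_H1normSq_le he hlam hL hε.le hφ0 hφ0deriv
    (fun t ht => (hφ0bound t ht).trans_eq hM.symm) hφε (hφεinit.trans hφ0init.symm) hφεH2
    hφεderiv hT
  have hscale : ε * (B₁ ^ 2 * (H1normSq e lam ψ).toReal) / 2 * (τ / ε) =
      τ / 2 * B₁ ^ 2 * (H1normSq e lam ψ).toReal := by
    field_simp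
  rw [hφ0init, Real.coe_toNNReal _ (by positivity), hscale] at hre
  have hoverlap : 3 / 4 * ‖ψ‖ ^ 2 - τ / 2 * B₁ ^ 2 * (H1normSq e lam ψ).toReal ≤
      ‖⟪φε (τ / ε), φ0 (τ / ε)⟫_ℂ‖ :=
    calc _ ≤ (⟪φε (τ / ε), φ0 (τ / ε)⟫_ℂ).re := by linarith [sq_nonneg ‖φε (τ / ε)‖]
      _ ≤ _ := Complex.re_le_norm _
  refine ⟨hoverlap, fun hτle => ?_⟩
  rcases (norm_nonneg ψ).eq_or_lt with hψ_zero | hψ_pos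
  · simp [← hψ_zero]
  refine le_of_mul_le_mul_right ?_ hψ_pos
  calc 1 / 4 * ‖ψ‖ * ‖ψ‖ ≤ ‖⟪φε (τ / ε), φ0 (τ / ε)⟫_ℂ‖ := by linarith
    _ ≤ ‖φε (τ / ε)‖ * ‖ψ‖ := hφ0norm ▸ norm_inner_le_norm _ _

/-- quantitative necessity direction of Theorem `main`: if the free evolution
`φ⁰` of a unit vector `ψ ∈ H¹(Γ)` keeps its `H¹(Γ)`-norm bounded by `B₁‖ψ‖₁` (as happens
when `ψ` is an `H¹(Γ)` eigenfunction of the period operator, `Vψ = e^{iE}ψ`), then for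
`τ ≤ B₁⁻²‖ψ‖₁⁻²` the diffusive solution satisfies
`|⟨φ^ε(τ/ε), φ⁰(τ/ε)⟩| ≥ 3/4 − (τ/2)B₁²‖ψ‖₁²` and in particular `‖φ^ε(τ/ε)‖ ≥ 1/4`. -/
theorem statement11 {H : Type*} [NormedAddCommGroup H] [InnerProductSpace ℂ H]
    [CompleteSpace H] [TopologicalSpace.SeparableSpace H]
    (e : HilbertBasis ℕ ℂ H) (lam : ℕ → ℝ)
    (hlam_pos : ∀ j, 0 < lam j) (hlam_mono : Monotone lam)
    (L : ℝ → H →ₗ[ℂ] H)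
    (hLsym : ∀ t : ℝ, ∀ x y : H, MemH1 (⇑e) lam x → MemH1 (⇑e) lam y →
      ⟪L t x, y⟫_ℂ = ⟪x, L t y⟫_ℂ)
    (ε : ℝ) (hε : 0 < ε) (B₁ : ℝ) (hB₁ : 0 < B₁) (E : ℝ)
    (ψ : H) (hψH1 : MemH1 (⇑e) lam ψ) (hψnorm : ‖ψ‖ = 1)
    (φ0 : ℝ → H)
    (hφ0cont : ContinuousOn φ0 (Set.Ici (0 : ℝ))) (hφ0init : φ0 0 = ψ)
    (hφ0H1 : ∀ t : ℝ, 0 < t → MemH1 (⇑e) lam (φ0 t))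
    (hφ0deriv : ∀ t : ℝ, 0 < t → HasDerivAt φ0 (Complex.I • L t (φ0 t)) t)
    (hφ0bound : ∀ t : ℝ, 0 ≤ t →
      H1normSq (⇑e) lam (φ0 t) ≤ ENNReal.ofReal (B₁ ^ 2) * H1normSq (⇑e) lam ψ)
    (φε : ℝ → H)
    (hφεcont : ContinuousOn φε (Set.Ici (0 : ℝ))) (hφεinit : φε 0 = ψ)
    (hφεH2 : ∀ t : ℝ, 0 < t → MemH2 (⇑e) lam (φε t))
    (hφεderiv : ∀ t : ℝ, 0 < t →
      HasDerivAt φε (Complex.I • L t (φε t) - ε • Gam (⇑e) lam (φε t)) t) :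
    ∀ τ : ℝ, 0 < τ → τ ≤ (B₁ ^ 2 * (H1normSq (⇑e) lam ψ).toReal)⁻¹ →
      3 / 4 - τ / 2 * B₁ ^ 2 * (H1normSq (⇑e) lam ψ).toReal ≤
        ‖⟪φε (τ / ε), φ0 (τ / ε)⟫_ℂ‖ ∧
      1 / 4 ≤ ‖φε (τ / ε)‖ := by
  intro τ hτ hτle
  have h := statement11_general e.orthonormal (fun j => (hlam_pos j).le) hLsym hε hψH1 hφ0cont
    hφ0init hφ0deriv (fun t ht => hφ0bound t ht.le) hφεcont hφεinit hφεH2 hφεderiv hτ.le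
  simp only [hψnorm, one_pow, mul_one] at h
  exact ⟨h.1, h.2 ((mul_le_mul_of_nonneg_right hτle (by positivity)).trans inv_mul_le_one)⟩
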